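/- Let H be a finitely generated projective Hopf k-algebra with Frobenius homomorphism ψ : H → P and left norm N = Σᵢ Nᵢ ⊗ qᵢ ∈ H ⊗ Q (so that Σᵢ ψ(aNᵢ)qᵢ = ε(a) for all a). Then the module of left integrals in the H-bimodule H ⊗ Q, namely {T : aT = ε(a)T for all a ∈ H}, is freely generated as a k-module by N and is a k-direct summand of H ⊗ Q. -/

import Mathlib

open scoped TensorProduct

/-- The convolution product on the dual of a coalgebra: `(g * f)(a) = Σ g(a₍₁₎) f(a₍₂₎)`. -/
noncomputable def conv (k H : Type*) [CommRing k] [AddCommGroup H] [Module k H]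
    [Coalgebra k H] (g f : Module.Dual k H) : Module.Dual k H :=
  LinearMap.mul' k k ∘ₗ TensorProduct.map g f ∘ₗ Coalgebra.comul

/-- The Frobenius homomorphism `ψ : H → P = J*`, `ψ(a)(q) = q(a)`. -/
noncomputable def psiH (k H : Type*) [CommRing k] [Ring H] [HopfAlgebra k H]
    (J : Submodule k (Module.Dual k H)) : H →ₗ[k] Module.Dual k ↥J :=
  (Submodule.subtype J).dualMap ∘ₗ Module.Dual.eval k H

/-- The canonical map `H ⊗ Q → H*` (for `Q = J` the left integrals in `H*`), sending
`a ⊗ q` to the functional `z ↦ ψ(z a)(q)`. -/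
noncomputable def ThetaMap (k H : Type*) [CommRing k] [Ring H] [HopfAlgebra k H]
    (J : Submodule k (Module.Dual k H)) : H ⊗[k] ↥J →ₗ[k] Module.Dual k H :=
  TensorProduct.lift
    (((((LinearMap.llcomp k H (Module.Dual k ↥J) k).comp
          (LinearMap.applyₗ (R := k))).flip).comp
        ((LinearMap.llcomp k H H (Module.Dual k ↥J) (psiH k H J)).comp
          (LinearMap.mul k H).flip)))

open HopfAlgebra Coalgebra in
lemma comul_antipode_aux (k H : Type*) [CommRing k] [Ring H] [HopfAlgebra k H] (a : H)
    {ι : Type*} (r : Coalgebra.Repr k a ι) :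
    ∑ i ∈ r.index, comul (R := k) (antipode k (r.left i)) * (r.right i ⊗ₜ[k] (1 : H))
      = (1 : H) ⊗ₜ[k] antipode k a := by
  let D : H →ₐ[k] H ⊗[k] H := Bialgebra.comulAlgHom k H
  let L : H →ₐ[k] H ⊗[k] H := Algebra.TensorProduct.includeLeft
  let R : H →ₐ[k] H ⊗[k] H := Algebra.TensorProduct.includeRight
  let S : H →ₗ[k] H := antipode k
  have one_comp : ∀ (A : H →ₐ[k] H ⊗[k] H),
      WithConv.toConv (A.toLinearMap ∘ₗ (1 : WithConv (H →ₗ[k] H)).ofConv) = 1 := by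
    intro A
    ext x
    simp [LinearMap.convOne_def]
  have h1 : WithConv.toConv (D.toLinearMap ∘ₗ S) * WithConv.toConv D.toLinearMap = 1 := by
    have := LinearMap.algHom_comp_convMul_distrib D (WithConv.toConv S)
      (WithConv.toConv LinearMap.id)
    rw [LinearMap.antipode_mul_id] at this
    rw [← one_comp D, this]
    rfl
  have h2 : WithConv.toConv R.toLinearMap * WithConv.toConv (R.toLinearMap ∘ₗ S) = 1 := by
    have := LinearMap.algHom_comp_convMul_distrib R (WithConv.toConv LinearMap.id)
      (WithConv.toConv S)
    rw [LinearMap.id_mul_antipode] at this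
    rw [← one_comp R, this]
    rfl
  have h3 : WithConv.toConv L.toLinearMap * WithConv.toConv R.toLinearMap
      = WithConv.toConv D.toLinearMap := by
    ext x
    rw [(ℛ k x).convMul_apply]
    simp [L, R, D, (ℛ k x).eq]
  have h4 : WithConv.toConv (D.toLinearMap ∘ₗ S) * WithConv.toConv L.toLinearMap
      = WithConv.toConv (R.toLinearMap ∘ₗ S) := by
    calc _ = WithConv.toConv (D.toLinearMap ∘ₗ S) * WithConv.toConv L.toLinearMap *
          (WithConv.toConv R.toLinearMap * WithConv.toConv (R.toLinearMap ∘ₗ S)) := by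
            rw [h2, mul_one]
      _ = WithConv.toConv (D.toLinearMap ∘ₗ S) * (WithConv.toConv L.toLinearMap *
          WithConv.toConv R.toLinearMap) * WithConv.toConv (R.toLinearMap ∘ₗ S) := by
            simp only [mul_assoc]
      _ = _ := by rw [h3, h1, one_mul]
  have h5 := congrArg (fun f => f a) h4
  simp only [r.convMul_apply] at h5
  exact h5

/-- `x ⊗ y ↦ f(y) x`. -/
noncomputable def sliceR (k H : Type*) [CommRing k] [Ring H] [HopfAlgebra k H] :
    Module.Dual k H →ₗ[k] (H ⊗[k] H →ₗ[k] H) :=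
  (LinearMap.llcomp k (H ⊗[k] H) (H ⊗[k] k) H (TensorProduct.rid k H).toLinearMap) ∘ₗ
    LinearMap.lTensorHom H

lemma sliceR_tmul (k H : Type*) [CommRing k] [Ring H] [HopfAlgebra k H]
    (f : Module.Dual k H) (x y : H) : sliceR k H f (x ⊗ₜ y) = f y • x := by
  simp [sliceR]

/-- `W f z = z₁ f(z₂)`. -/
noncomputable def coactW (k H : Type*) [CommRing k] [Ring H] [HopfAlgebra k H] :
    Module.Dual k H →ₗ[k] (H →ₗ[k] H) :=
  (LinearMap.lcomp k H (Coalgebra.comul (R := k) (A := H))) ∘ₗ sliceR k H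

/-- `act f a = f(· S(a))`. -/
noncomputable def actS (k H : Type*) [CommRing k] [Ring H] [HopfAlgebra k H] :
    Module.Dual k H →ₗ[k] H →ₗ[k] Module.Dual k H :=
  LinearMap.mk₂ k (fun f a => f ∘ₗ LinearMap.mulRight k (HopfAlgebra.antipode k a))
    (by intros; ext; simp) (by intros; ext; simp)
    (by intros; ext; simp [mul_add]) (by intros; ext; simp)

lemma actS_apply (k H : Type*) [CommRing k] [Ring H] [HopfAlgebra k H]
    (f : Module.Dual k H) (a z : H) :
    actS k H f a z = f (z * HopfAlgebra.antipode k a) := rfl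

lemma coactW_integral (k H : Type*) [CommRing k] [Ring H] [HopfAlgebra k H]
    [Module.Projective k H] (q : Module.Dual k H)
    (hq : ∀ g : Module.Dual k H, conv k H g q = g 1 • q) (z : H) :
    coactW k H q z = q z • 1 := by
  rw [← sub_eq_zero, ← Module.forall_dual_apply_eq_zero_iff k]
  intro g
  have h := LinearMap.congr_fun (hq g) z
  have h' : ∀ t : H ⊗[k] H, g (sliceR k H q t)
      = LinearMap.mul' k k (TensorProduct.map g q t) := by
    intro t
    induction t with
    | zero => simp
    | tmul x y => simp [sliceR_tmul, mul_comm]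
    | add x y hx hy => simp only [map_add, hx, hy]
  have h2 : g (coactW k H q z) = conv k H g q z := h' _
  rw [map_sub, h2, h]
  simp [mul_comm]

open HopfAlgebra Coalgebra in
lemma coactW_actS (k H : Type*) [CommRing k] [Ring H] [HopfAlgebra k H]
    [Module.Projective k H] (q : Module.Dual k H)
    (hq : ∀ g : Module.Dual k H, conv k H g q = g 1 • q) (a z : H)
    {ι : Type*} (r : Coalgebra.Repr k a ι) :
    coactW k H (actS k H q a) z
      = ∑ i ∈ r.index, q (z * antipode k (r.left i)) • r.right i := by
  have h1 : ∀ (b : H) (t : H ⊗[k] H), sliceR k H (q ∘ₗ LinearMap.mulRight k b) t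
      = sliceR k H q (t * (1 ⊗ₜ[k] b)) := by
    intro b t
    induction t with
    | zero => simp
    | tmul x y => simp [sliceR_tmul]
    | add x y hx hy => simp only [map_add, add_mul, hx, hy]
  have h2 : ∀ (b : H) (t : H ⊗[k] H), sliceR k H q (t * (b ⊗ₜ[k] 1))
      = sliceR k H q t * b := by
    intro b t
    induction t with
    | zero => simp
    | tmul x y => simp [sliceR_tmul]
    | add x y hx hy => simp only [map_add, add_mul, hx, hy]
  have h3 : coactW k H (actS k H q a) z
      = sliceR k H q (comul (R := k) z * ((1 : H) ⊗ₜ[k] antipode k a)) :=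
    h1 (antipode k a) (comul (R := k) z)
  rw [h3, ← comul_antipode_aux k H a r, Finset.mul_sum, map_sum]
  refine Finset.sum_congr rfl fun i _ => ?_
  rw [← mul_assoc, ← Bialgebra.comul_mul, h2]
  have := coactW_integral k H q hq (z * antipode k (r.left i))
  have h4 : sliceR k H q (comul (R := k) (z * antipode k (r.left i)))
    = coactW k H q (z * antipode k (r.left i)) := rfl
  rw [h4, this]
  simp

/-- The coaction `H* → H* ⊗ H`. -/
noncomputable def rhoH (k H : Type*) [CommRing k] [Ring H] [HopfAlgebra k H]
    [Module.Finite k H] [Module.Projective k H] :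
    Module.Dual k H →ₗ[k] Module.Dual k H ⊗[k] H :=
  (dualTensorHomEquiv k H H).symm.toLinearMap ∘ₗ coactW k H

lemma rhoH_actS (k H : Type*) [CommRing k] [Ring H] [HopfAlgebra k H]
    [Module.Finite k H] [Module.Projective k H] (q : Module.Dual k H)
    (hq : ∀ g : Module.Dual k H, conv k H g q = g 1 • q) (a : H)
    {ι : Type*} (r : Coalgebra.Repr k a ι) :
    rhoH k H (actS k H q a) = ∑ i ∈ r.index, actS k H q (r.left i) ⊗ₜ[k] r.right i := by
  have : coactW k H (actS k H q a) = dualTensorHomEquiv k H H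
      (∑ i ∈ r.index, actS k H q (r.left i) ⊗ₜ[k] r.right i) := by
    ext z
    rw [coactW_actS k H q hq a z r, map_sum, LinearMap.sum_apply]
    rfl
  simp only [rhoH, LinearMap.comp_apply, this]
  exact LinearEquiv.symm_apply_apply _ _

/-- `P f = f₀ · S(f₁)`. -/
noncomputable def projP (k H : Type*) [CommRing k] [Ring H] [HopfAlgebra k H]
    [Module.Finite k H] [Module.Projective k H] :
    Module.Dual k H →ₗ[k] Module.Dual k H :=
  TensorProduct.lift (actS k H) ∘ₗ LinearMap.lTensor _ (HopfAlgebra.antipode k) ∘ₗ rhoH k H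

open HopfAlgebra Coalgebra in
lemma projP_actS (k H : Type*) [CommRing k] [Ring H] [HopfAlgebra k H]
    [Module.Finite k H] [Module.Projective k H] (q : Module.Dual k H)
    (hq : ∀ g : Module.Dual k H, conv k H g q = g 1 • q) (a : H) :
    projP k H (actS k H q a) = counit (R := k) a • q := by
  ext z
  have h := sum_mul_antipode_eq_smul (R := k) (ℛ k a)
  have h2 := congrArg (fun x => q (z * antipode k x)) h
  simp only [map_sum, antipode_mul_antidistrib, Finset.mul_sum, map_smul, antipode_one,
    mul_smul_comm, mul_one] at h2
  simp only [projP, LinearMap.comp_apply, rhoH_actS k H q hq a (ℛ k a), map_sum,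
    LinearMap.lTensor_tmul, TensorProduct.lift.tmul, LinearMap.sum_apply, actS_apply,
    LinearMap.smul_apply, mul_assoc, h2]

/-- The left inverse of `Φ`. -/
noncomputable def invL (k H : Type*) [CommRing k] [Ring H] [HopfAlgebra k H]
    [Module.Finite k H] [Module.Projective k H] :
    Module.Dual k H →ₗ[k] H ⊗[k] Module.Dual k H :=
  (TensorProduct.comm k _ _).toLinearMap ∘ₗ LinearMap.rTensor H (projP k H) ∘ₗ rhoH k H

open HopfAlgebra Coalgebra in
lemma invL_actS (k H : Type*) [CommRing k] [Ring H] [HopfAlgebra k H]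
    [Module.Finite k H] [Module.Projective k H] (q : Module.Dual k H)
    (hq : ∀ g : Module.Dual k H, conv k H g q = g 1 • q) (a : H) :
    invL k H (actS k H q a) = a ⊗ₜ q := by
  simp only [invL, LinearMap.comp_apply, rhoH_actS k H q hq a (ℛ k a), map_sum,
    LinearMap.rTensor_tmul, projP_actS k H q hq]
  conv_rhs => rw [← sum_counit_smul (R := k) (ℛ k a), TensorProduct.sum_tmul]
  refine Finset.sum_congr rfl fun i _ => ?_
  simp [TensorProduct.smul_tmul]

lemma ThetaMap_tmul (k H : Type*) [CommRing k] [Ring H] [HopfAlgebra k H]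
    (J : Submodule k (Module.Dual k H)) (a z : H) (q : J) :
    ThetaMap k H J (a ⊗ₜ q) z = (q : Module.Dual k H) (z * a) := rfl

lemma invL_Theta (k H : Type*) [CommRing k] [Ring H] [HopfAlgebra k H]
    [Module.Finite k H] [Module.Projective k H]
    (J : Submodule k (Module.Dual k H))
    (hJ : ↑J = {f : Module.Dual k H | ∀ g : Module.Dual k H, conv k H g f = g 1 • f})
    (T : H ⊗[k] ↥J) :
    invL k H (ThetaMap k H J (LinearMap.rTensor ↥J (HopfAlgebra.antipode k) T))
      = LinearMap.lTensor H J.subtype T := by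
  induction T with
  | zero => simp
  | tmul a q =>
    have hq : (q : Module.Dual k H) ∈ (J : Set (Module.Dual k H)) := q.2
    rw [hJ] at hq
    exact invL_actS k H q hq a
  | add x y hx hy => simp only [map_add, hx, hy]

lemma exists_left_inv (k H : Type*) [CommRing k] [Ring H] [HopfAlgebra k H]
    [Module.Finite k H] [Module.Projective k H]
    (J : Submodule k (Module.Dual k H))
    (hJ : ↑J = {f : Module.Dual k H | ∀ g : Module.Dual k H, conv k H g f = g 1 • f})
    (T : H ⊗[k] ↥J) :
    ∃ V : H →ₗ[k] H, ∀ a, V (HopfAlgebra.antipode k a) = ThetaMap k H J T 1 • a := by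
  induction T with
  | zero => exact ⟨0, by simp⟩
  | tmul h q =>
    have hq : (q : Module.Dual k H) ∈ (J : Set (Module.Dual k H)) := q.2
    rw [hJ] at hq
    refine ⟨(TensorProduct.rid k H).toLinearMap ∘ₗ
      LinearMap.lTensor H (Module.Dual.eval k H h) ∘ₗ invL k H ∘ₗ
      ((LinearMap.llcomp k H H k q.1) ∘ₗ (LinearMap.mul k H).flip), fun a => ?_⟩
    have h1 := invL_actS k H q hq a
    have h2 : ((LinearMap.llcomp k H H k q.1) ∘ₗ (LinearMap.mul k H).flip)
      (HopfAlgebra.antipode k a) = actS k H q a := rfl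
    rw [LinearMap.comp_apply, LinearMap.comp_apply, LinearMap.comp_apply, h2, h1]
    simp [ThetaMap_tmul]
  | add x y hx hy =>
    obtain ⟨V, hV⟩ := hx
    obtain ⟨V', hV'⟩ := hy
    exact ⟨V + V', fun a => by simp [hV, hV', add_smul]⟩

lemma ThetaMap_injective (k H : Type*) [CommRing k] [Ring H] [HopfAlgebra k H]
    [Module.Finite k H] [Module.Projective k H]
    (J : Submodule k (Module.Dual k H))
    (hJ : ↑J = {f : Module.Dual k H | ∀ g : Module.Dual k H, conv k H g f = g 1 • f})
    (N : H ⊗[k] ↥J)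
    (hN : ThetaMap k H J N = Coalgebra.counit (R := k)) :
    Function.Injective (ThetaMap k H J) := by
  obtain ⟨V, hV⟩ := exists_left_inv k H J hJ N
  have hV' : ∀ a, V (HopfAlgebra.antipode k a) = a := by
    intro a
    rw [hV, hN]; simp
  have hVs : Function.Surjective V := fun a => ⟨_, hV' a⟩
  have hVi : Function.Injective V := OrzechProperty.injective_of_surjective_endomorphism V hVs
  have hS : Function.Surjective (HopfAlgebra.antipode k (A := H)) :=
    fun b => ⟨V b, hVi (hV' _)⟩
  rw [injective_iff_map_eq_zero]
  intro T hT
  obtain ⟨T', rfl⟩ := LinearMap.rTensor_surjective J hS T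
  have h := invL_Theta k H J hJ T'
  rw [hT, map_zero] at h
  have hi : Function.Injective (LinearMap.lTensor H J.subtype) :=
    Module.Flat.lTensor_preserves_injective_linearMap _ J.injective_subtype
  have : T' = 0 := hi (by rw [← h, map_zero])
  simp [this]

lemma ThetaMap_mul (k H : Type*) [CommRing k] [Ring H] [HopfAlgebra k H]
    (J : Submodule k (Module.Dual k H)) (a z : H) (T : H ⊗[k] ↥J) :
    ThetaMap k H J ((LinearMap.rTensor ↥J (LinearMap.mulLeft k a)) T) z
      = ThetaMap k H J T (z * a) := by
  induction T with
  | zero => simp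
  | tmul a q => simp [ThetaMap_tmul, mul_assoc]
  | add x y hx hy => simp only [map_add, LinearMap.add_apply, hx, hy]

/-- The space of left integrals in the `H`-bimodule `H ⊗ Q` is freely generated by the
left norm `N` (the preimage of the counit under `H ⊗ Q ≅ H*`) and is a `k`-direct summand
of `H ⊗ Q`. -/
theorem left_norm_generates_integrals (k H : Type*) [CommRing k] [Ring H] [HopfAlgebra k H]
    [Module.Finite k H] [Module.Projective k H]
    (J : Submodule k (Module.Dual k H))
    (hJ : ↑J = {f : Module.Dual k H | ∀ g : Module.Dual k H, conv k H g f = g 1 • f})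
    (N : H ⊗[k] ↥J)
    (hN : ThetaMap k H J N = Coalgebra.counit (R := k)) :
    (∀ a : H, (LinearMap.rTensor ↥J (LinearMap.mulLeft k a)) N
        = Coalgebra.counit (R := k) a • N) ∧
    (∀ T : H ⊗[k] ↥J,
      (∀ a : H, (LinearMap.rTensor ↥J (LinearMap.mulLeft k a)) T
          = Coalgebra.counit (R := k) a • T) → ∃! c : k, T = c • N) ∧
    (∃ π : H ⊗[k] ↥J →ₗ[k] H ⊗[k] ↥J,
      (∀ T : H ⊗[k] ↥J,
        (∀ a : H, (LinearMap.rTensor ↥J (LinearMap.mulLeft k a)) T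
            = Coalgebra.counit (R := k) a • T) → π T = T) ∧
      (∀ (x : H ⊗[k] ↥J) (a : H),
        (LinearMap.rTensor ↥J (LinearMap.mulLeft k a)) (π x)
          = Coalgebra.counit (R := k) a • π x)) := by
  have hinj := ThetaMap_injective k H J hJ N hN
  have hNint : ∀ a : H, (LinearMap.rTensor ↥J (LinearMap.mulLeft k a)) N
        = Coalgebra.counit (R := k) a • N := by
    intro a
    apply hinj
    ext z
    rw [ThetaMap_mul, map_smul, hN]
    simp [mul_comm]
  have hT1 : ∀ T : H ⊗[k] ↥J,
      (∀ a : H, (LinearMap.rTensor ↥J (LinearMap.mulLeft k a)) T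
          = Coalgebra.counit (R := k) a • T) → T = ThetaMap k H J T 1 • N := by
    intro T hT
    apply hinj
    ext z
    have h := ThetaMap_mul k H J z 1 T
    rw [hT, one_mul] at h
    rw [← h, map_smul, map_smul, hN]
    simp [mul_comm]
  refine ⟨hNint, fun T hT => ⟨_, hT1 T hT, fun c hc => ?_⟩,
    (LinearMap.toSpanSingleton k _ N) ∘ₗ (LinearMap.applyₗ (1 : H)) ∘ₗ ThetaMap k H J,
    fun T hT => (hT1 T hT).symm, fun x a => ?_⟩
  · rw [hc, map_smul, hN]
    simp
  · simp only [LinearMap.comp_apply, LinearMap.toSpanSingleton_apply, map_smul, hNint]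
    rw [smul_comm]
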